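/- Let $\tilde m \in \mathbb{N}$, $\alpha \in \mathbb{N}_0^n$ with $|\alpha| \le \tilde m$, and $0 < s < \tau < 1$. Set $\theta := \frac{|\alpha|+s}{\tilde m+\tau}$. Then there are constants $C_1, C_2 > 0$ such that for all $f \in C^{\tilde m,\tau}(\mathbb{R}^n)$ and all $R \ge 1$: $\|\partial_x^{\alpha} f\|_{C^{0,s}(\mathbb{R}^n \setminus B_R(0))} \leq C_1 \|f\|_{C^0_b(\mathbb{R}^n\setminus B_R(0))}^{1-|\alpha|/\tilde m} \|f\|_{C^{\tilde m}_b(\mathbb{R}^n\setminus B_R(0))}^{|\alpha|/\tilde m} + C_2 \|f\|_{C^0_b(\mathbb{R}^n\setminus B_R(0))}^{1-\theta} \|f\|_{C^{\tilde m,\tau}(\mathbb{R}^n\setminus B_R(0))}^{\theta}$, with constants independent of $R$. -/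

import Mathlib

noncomputable section
open MeasureTheory

abbrev V (n : ℕ) := EuclideanSpace ℝ (Fin n)

noncomputable def pd (n k : ℕ) {E : Type*} [NormedAddCommGroup E] [NormedSpace ℝ E]
    (d : Fin k → Fin n) (f : V n → E) (x : V n) : E :=
  iteratedFDeriv ℝ k f x (fun i => EuclideanSpace.single (d i) 1)

noncomputable def cbNorm (n k : ℕ) {E : Type*} [NormedAddCommGroup E] [NormedSpace ℝ E]
    (f : V n → E) : ℝ :=
  ⨆ i : Fin (k+1), ⨆ x : V n, ‖iteratedFDeriv ℝ i f x‖

noncomputable def hSemi (n i : ℕ) (τ : ℝ) {E : Type*} [NormedAddCommGroup E] [NormedSpace ℝ E]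
    (f : V n → E) : ℝ :=
  ⨆ p : V n × V n, ‖iteratedFDeriv ℝ i f p.1 - iteratedFDeriv ℝ i f p.2‖ / ‖p.1 - p.2‖ ^ τ

noncomputable def hNorm (n m : ℕ) (τ : ℝ) {E : Type*} [NormedAddCommGroup E] [NormedSpace ℝ E]
    (f : V n → E) : ℝ :=
  cbNorm n m f + ⨆ i : Fin (m+1), hSemi n i τ f

def MemHold (n m : ℕ) (τ : ℝ) {E : Type*} [NormedAddCommGroup E] [NormedSpace ℝ E]
    (f : V n → E) : Prop :=
  ContDiff ℝ m f ∧ ∃ C : ℝ, ∀ i ≤ m, (∀ x, ‖iteratedFDeriv ℝ i f x‖ ≤ C) ∧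
    ∀ x y : V n, ‖iteratedFDeriv ℝ i f x - iteratedFDeriv ℝ i f y‖ ≤ C * ‖x - y‖ ^ τ

noncomputable def extCb (n k : ℕ) (R : ℝ) (f : V n → ℂ) : ℝ :=
  ⨆ i : Fin (k+1), ⨆ x : {x : V n // R ≤ ‖x‖}, ‖iteratedFDeriv ℝ i f x‖

/-- `C^{0,s}` norm of `g` on the exterior domain `{|x| ≥ R}`. -/
noncomputable def extC0s (n : ℕ) (s R : ℝ) (g : V n → ℂ) : ℝ :=
  (⨆ x : {x : V n // R ≤ ‖x‖}, ‖g x‖) +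
  ⨆ p : {x : V n // R ≤ ‖x‖} × {x : V n // R ≤ ‖x‖},
    ‖g p.1 - g p.2‖ / ‖(p.1 : V n) - (p.2 : V n)‖ ^ s

/-- `C^{m,τ}` norm of `f` on the exterior domain `{|x| ≥ R}`. -/
noncomputable def extHol (n m : ℕ) (τ R : ℝ) (f : V n → ℂ) : ℝ :=
  extCb n m R f + ⨆ i : Fin (m+1),
    ⨆ p : {x : V n // R ≤ ‖x‖} × {x : V n // R ≤ ‖x‖},
      ‖iteratedFDeriv ℝ i f p.1 - iteratedFDeriv ℝ i f p.2‖ /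
        ‖(p.1 : V n) - (p.2 : V n)‖ ^ τ

/-!
Let `Q = A + H * h ^ (m + τ)`, where `A` bounds `|f|` and `H` bounds the Hölder seminorm of `D^m f`
on the exterior domain. A `j`-th difference of `f` with steps of length at most `h` is at most
`2 ^ j * A`, and the mean value theorem turns it into `D^j f` at a nearby point. Descending from
`j = m`, where the Hölder bound controls the oscillation of `D^m f`, this gives
`|D^j f| ≤ C * Q / h ^ j` for every `h > 0`. The differences must not leave the exterior domain:
at `x` they are taken inside the half-space tangent at `x` to the sphere of radius `|x|`, which is
reached by changing the signs of the steps. The size of the ball does not enter, so `C` does not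
depend on `R`.

For the Hölder quotient of `D^j f` at `x` and `y`, points at distance at least `h / 2` are handled
by the triangle inequality. Closer points are joined by two segments through a common point of
their half-spaces, along which `D^(j+1) f` is bounded; such a point exists as `h ≤ 1 ≤ R`. The
result is a bound `C * Q / h ^ (j + s)` for all `0 < h ≤ 1`, and the choice
`h ^ (m + τ) = A / H` makes it `2 * C * A ^ (1 - θ) * H ^ θ`.
-/

section FiniteDifferences

variable {E F : Type*} [NormedAddCommGroup E] [NormedSpace ℝ E]
  [NormedAddCommGroup F] [NormedSpace ℝ F]

lemma hasDerivAt_iteratedFDeriv_tail {j : ℕ} {f : E → F} (hf : ContDiff ℝ (j + 1 : ℕ) f)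
    (x : E) (v : Fin (j + 1) → E) (t : ℝ) :
    HasDerivAt (fun t : ℝ => iteratedFDeriv ℝ j f (x + t • v 0) (Fin.tail v))
      (iteratedFDeriv ℝ (j + 1) f (x + t • v 0) v) t := by
  have hdiff : Differentiable ℝ (iteratedFDeriv ℝ j f) :=
    hf.differentiable_iteratedFDeriv (by exact_mod_cast j.lt_succ_self)
  have hline : HasDerivAt (fun t : ℝ => x + t • v 0) (v 0) t := by
    simpa using ((hasDerivAt_id t).smul_const (v 0)).const_add x
  exact (ContinuousMultilinearMap.apply ℝ (fun _ : Fin j => E) F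
    (Fin.tail v)).hasFDerivAt.comp_hasDerivAt t
      ((hdiff (x + t • v 0)).hasFDerivAt.comp_hasDerivAt t hline)

lemma norm_iteratedFDeriv_fwdDiff_sub_le {j : ℕ} {f : E → F} (hf : ContDiff ℝ (j + 1 : ℕ) f)
    {x : E} {v : Fin (j + 1) → E} {L : F} {ε : ℝ}
    (hL : ∀ t ∈ Set.Icc (0 : ℝ) 1, ‖iteratedFDeriv ℝ (j + 1) f (x + t • v 0) v - L‖ ≤ ε) :
    ‖iteratedFDeriv ℝ j (fwdDiff (v 0) f) x (Fin.tail v) - L‖ ≤ ε := by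
  have hfj : ContDiff ℝ j f := hf.of_le (by exact_mod_cast j.le_succ)
  have hshift : ContDiff ℝ j (fun y => f (y + v 0)) := hfj.comp (contDiff_id.add contDiff_const)
  have hderiv : ∀ t : ℝ, HasDerivAt
      (fun t : ℝ => iteratedFDeriv ℝ j f (x + t • v 0) (Fin.tail v) - t • L)
      (iteratedFDeriv ℝ (j + 1) f (x + t • v 0) v - L) t := fun t =>
    (hasDerivAt_iteratedFDeriv_tail hf x v t).sub (by simpa using (hasDerivAt_id t).smul_const L)
  have hmean := norm_image_sub_le_of_norm_deriv_le_segment_01'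
    (fun t _ => (hderiv t).hasDerivWithinAt) (fun t ht => hL t ⟨ht.1, ht.2.le⟩)
  unfold fwdDiff
  rw [fun_iteratedFDeriv_sub_apply hshift.contDiffAt hfj.contDiffAt, iteratedFDeriv_comp_add_right]
  simpa [sub_right_comm] using hmean

lemma cons_mem_Icc_zero_one {j : ℕ} {t : Fin j → ℝ} (ht : t ∈ Set.Icc 0 1) {r : ℝ}
    (hr : r ∈ Set.Icc 0 1) : (Fin.cons r t : Fin (j + 1) → ℝ) ∈ Set.Icc 0 1 :=
  ⟨Fin.le_cons.2 ⟨hr.1, ht.1⟩, Fin.cons_le.2 ⟨hr.2, ht.2⟩⟩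

lemma add_sum_cons_smul {j : ℕ} (x : E) (v : Fin (j + 1) → E) (r : ℝ) (t : Fin j → ℝ) :
    x + ∑ i, (Fin.cons r t : Fin (j + 1) → ℝ) i • v i =
      x + ∑ i, t i • Fin.tail v i + r • v 0 := by
  simp only [Fin.sum_univ_succ, Fin.cons_zero, Fin.cons_succ, Fin.tail]
  abel

lemma norm_le_of_iteratedFDeriv_near_of_parallelepiped {j : ℕ} {f : E → F}
    (hf : ContDiff ℝ j f) {x : E} {v : Fin j → E} {L : F} {A ε : ℝ}
    (hA : ∀ t ∈ Set.Icc (0 : Fin j → ℝ) 1, ‖f (x + ∑ i, t i • v i)‖ ≤ A)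
    (hL : ∀ t ∈ Set.Icc (0 : Fin j → ℝ) 1,
      ‖iteratedFDeriv ℝ j f (x + ∑ i, t i • v i) v - L‖ ≤ ε) :
    ‖L‖ ≤ 2 ^ j * A + ε := by
  induction j generalizing f A with
  | zero =>
    have hfx : ‖f x‖ ≤ A := by simpa using hA 0 (by simp)
    have hLx : ‖f x - L‖ ≤ ε := by simpa using hL 0 (by simp)
    have := norm_sub_norm_le L (f x)
    rw [norm_sub_rev] at this
    linarith
  | succ j ih =>
    have hfj : ContDiff ℝ j f := hf.of_le (by exact_mod_cast j.le_succ)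
    have hdiff : ∀ t ∈ Set.Icc (0 : Fin j → ℝ) 1,
        ‖fwdDiff (v 0) f (x + ∑ i, t i • Fin.tail v i)‖ ≤ 2 * A := fun t ht => by
      have h0 := hA _ (cons_mem_Icc_zero_one ht (r := 0) (by simp))
      have h1 := hA _ (cons_mem_Icc_zero_one ht (r := 1) (by simp))
      rw [add_sum_cons_smul, zero_smul, add_zero] at h0
      rw [add_sum_cons_smul, one_smul] at h1
      exact (norm_sub_le _ _).trans (by linarith)
    have hL' : ∀ t ∈ Set.Icc (0 : Fin j → ℝ) 1, ‖iteratedFDeriv ℝ j (fwdDiff (v 0) f)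
        (x + ∑ i, t i • Fin.tail v i) (Fin.tail v) - L‖ ≤ ε := fun t ht =>
      norm_iteratedFDeriv_fwdDiff_sub_le hf fun r hr => by
        simpa only [add_sum_cons_smul] using hL _ (cons_mem_Icc_zero_one ht hr)
    calc ‖L‖ ≤ 2 ^ j * (2 * A) + ε :=
          ih ((hfj.comp (contDiff_id.add contDiff_const)).sub hfj) hdiff hL'
      _ = 2 ^ (j + 1) * A + ε := by ring

end FiniteDifferences

section HalfSpaces

variable {E F : Type*} [NormedAddCommGroup E] [InnerProductSpace ℝ E]
  [NormedAddCommGroup F] [NormedSpace ℝ F]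

/-- The closed half-space with boundary point `x` and inner normal `x`: a convex set that contains
`x` and stays outside the open ball of radius `‖x‖`. It is the whole space for `x = 0`. -/
def outerHalfSpace (x : E) : Set E := {y | inner ℝ x x ≤ inner ℝ x y}

lemma mem_outerHalfSpace {x y : E} : y ∈ outerHalfSpace x ↔ inner ℝ x x ≤ inner ℝ x y :=
  Iff.rfl

lemma self_mem_outerHalfSpace (x : E) : x ∈ outerHalfSpace x :=
  le_refl (inner ℝ x x)

lemma add_mem_outerHalfSpace {x y : E} (hy : 0 ≤ inner ℝ x y) : x + y ∈ outerHalfSpace x := by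
  simpa only [mem_outerHalfSpace, inner_add_right, le_add_iff_nonneg_right] using hy

lemma convex_outerHalfSpace (x : E) : Convex ℝ (outerHalfSpace x) :=
  convex_halfSpace_ge (innerₛₗ ℝ x).isLinear _

lemma norm_le_of_mem_outerHalfSpace {x y : E} (hy : y ∈ outerHalfSpace x) : ‖x‖ ≤ ‖y‖ := by
  rcases (norm_nonneg x).eq_or_lt with hx | hx
  · exact hx ▸ norm_nonneg y
  · refine le_of_mul_le_mul_left ?_ hx
    rw [← real_inner_self_eq_norm_mul_norm]
    exact hy.trans (real_inner_le_norm x y)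

lemma exists_smul_eq_of_inner_nonneg (x w : E) {h : ℝ} (hh : 0 < h) :
    ∃ (c : ℝ) (u : E), c • u = w ∧ |c| = ‖w‖ / h ∧ ‖u‖ ≤ h ∧ 0 ≤ inner ℝ x u := by
  wlog hw : 0 ≤ inner ℝ x w generalizing w
  · obtain ⟨c, u, hcu, hc, hu⟩ := this (-w) (by rw [inner_neg_right]; linarith)
    exact ⟨-c, u, by rw [neg_smul, hcu, neg_neg], by rw [abs_neg, hc, norm_neg], hu⟩
  rcases eq_or_ne w 0 with rfl | hw0
  · exact ⟨0, 0, by simp, by simp, by simpa using hh.le, by simp⟩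
  have hnorm : 0 < ‖w‖ := norm_pos_iff.2 hw0
  refine ⟨‖w‖ / h, (h / ‖w‖) • w, ?_, abs_of_pos (by positivity), ?_, ?_⟩
  · rw [smul_smul, div_mul_div_cancel₀ hh.ne', div_self hnorm.ne', one_smul]
  · rw [norm_smul, Real.norm_of_nonneg (by positivity), div_mul_cancel₀ _ hnorm.ne']
  · rw [real_inner_smul_right]
    positivity

lemma opNorm_le_div_pow_of_inner_nonneg {j : ℕ} {M : E [×j]→L[ℝ] F} {x : E} {h B : ℝ}
    (hh : 0 < h)
    (hM : ∀ v : Fin j → E, (∀ i, ‖v i‖ ≤ h) → (∀ i, 0 ≤ inner ℝ x (v i)) → ‖M v‖ ≤ B) :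
    ‖M‖ ≤ B / h ^ j := by
  have hB : 0 ≤ B :=
    (norm_nonneg _).trans (hM 0 (fun _ => by simpa using hh.le) fun _ => by simp)
  refine M.opNorm_le_bound (by positivity) fun w => ?_
  choose c u hcu hc hu hxu using fun i => exists_smul_eq_of_inner_nonneg x (w i) hh
  calc ‖M w‖ = (∏ i, |c i|) * ‖M u‖ := by
        rw [← funext hcu, M.map_smul_univ, norm_smul, norm_prod]
        simp only [Real.norm_eq_abs]
    _ = (∏ i, ‖w i‖) / h ^ j * ‖M u‖ := by simp [hc, Finset.prod_div_distrib]
    _ ≤ (∏ i, ‖w i‖) / h ^ j * B := by gcongr; exact hM u hu hxu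
    _ = B / h ^ j * ∏ i, ‖w i‖ := by ring

lemma norm_iteratedFDeriv_le_of_outerHalfSpace {j : ℕ} {f : E → F} (hf : ContDiff ℝ j f)
    {x : E} {A ω h : ℝ} (hh : 0 < h) (hA : ∀ y ∈ outerHalfSpace x, ‖f y‖ ≤ A)
    (hω : ∀ y ∈ outerHalfSpace x, ‖y - x‖ ≤ j * h →
      ‖iteratedFDeriv ℝ j f y - iteratedFDeriv ℝ j f x‖ ≤ ω) :
    ‖iteratedFDeriv ℝ j f x‖ ≤ 2 ^ j * A / h ^ j + ω := by
  have hbound : ∀ v : Fin j → E, (∀ i, ‖v i‖ ≤ h) → (∀ i, 0 ≤ inner ℝ x (v i)) →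
      ‖iteratedFDeriv ℝ j f x v‖ ≤ 2 ^ j * A + ω * h ^ j := by
    intro v hv hxv
    have hmem : ∀ t ∈ Set.Icc (0 : Fin j → ℝ) 1, x + ∑ i, t i • v i ∈ outerHalfSpace x :=
      fun t ht => add_mem_outerHalfSpace <| by
        simp only [inner_sum, real_inner_smul_right]
        exact Finset.sum_nonneg fun i _ => mul_nonneg (ht.1 i) (hxv i)
    have hdist : ∀ t ∈ Set.Icc (0 : Fin j → ℝ) 1, ‖∑ i, t i • v i‖ ≤ j * h := fun t ht => by
      have hterm : ∀ i ∈ Finset.univ, ‖t i • v i‖ ≤ h := fun i _ => by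
        rw [norm_smul, Real.norm_of_nonneg (ht.1 i)]
        exact (mul_le_of_le_one_left (norm_nonneg _) (ht.2 i)).trans (hv i)
      simpa using norm_sum_le_of_le _ hterm
    refine norm_le_of_iteratedFDeriv_near_of_parallelepiped hf
      (fun t ht => hA _ (hmem t ht)) fun t ht => ?_
    have hosc := hω _ (hmem t ht) (by simpa using hdist t ht)
    rw [← sub_apply]
    exact (ContinuousMultilinearMap.le_mul_prod_of_opNorm_le_of_le hosc hv).trans_eq (by simp)
  calc ‖iteratedFDeriv ℝ j f x‖ ≤ (2 ^ j * A + ω * h ^ j) / h ^ j :=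
        opNorm_le_div_pow_of_inner_nonneg hh hbound
    _ = 2 ^ j * A / h ^ j + ω := by
        rw [add_div, mul_div_cancel_right₀ _ (pow_pos hh j).ne']

lemma norm_image_sub_le_of_mem_outerHalfSpace {g : E → F} (hg : Differentiable ℝ g)
    {x y : E} {S : ℝ} (hS : ∀ z, ‖x‖ ≤ ‖z‖ → ‖fderiv ℝ g z‖ ≤ S) (hy : y ∈ outerHalfSpace x) :
    ‖g y - g x‖ ≤ S * ‖y - x‖ :=
  (convex_outerHalfSpace x).norm_image_sub_le_of_norm_fderiv_le (fun z _ => hg z)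
    (fun z hz => hS z (norm_le_of_mem_outerHalfSpace hz)) (self_mem_outerHalfSpace x) hy

lemma smul_mem_outerHalfSpace_self {x : E} {c : ℝ} (hc : 1 ≤ c) : c • x ∈ outerHalfSpace x := by
  simpa only [mem_outerHalfSpace, real_inner_smul_right] using
    le_mul_of_one_le_left real_inner_self_nonneg hc

lemma smul_mem_outerHalfSpace_of_near {x y : E} {r : ℝ} (hr : 0 ≤ r) (hr' : r ≤ 1 / 2)
    (hxy : ‖x - y‖ = r * ‖x‖) : (1 + 2 * r) • y ∈ outerHalfSpace x := by
  have hinner : ‖x‖ ^ 2 * (1 - r) ≤ inner ℝ x y := by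
    have := real_inner_le_norm x (x - y)
    rw [inner_sub_right, real_inner_self_eq_norm_sq, hxy] at this
    linarith
  have hone : 1 ≤ (1 + 2 * r) * (1 - r) := by nlinarith
  rw [mem_outerHalfSpace, real_inner_smul_right, real_inner_self_eq_norm_sq]
  calc ‖x‖ ^ 2 ≤ ‖x‖ ^ 2 * ((1 + 2 * r) * (1 - r)) :=
        le_mul_of_one_le_right (by positivity) hone
    _ = (1 + 2 * r) * (‖x‖ ^ 2 * (1 - r)) := by ring
    _ ≤ (1 + 2 * r) * inner ℝ x y := by gcongr

lemma exists_mem_outerHalfSpace_inter {x y : E} (hxy : ‖x - y‖ ≤ ‖x‖ / 2) :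
    ∃ z ∈ outerHalfSpace x ∩ outerHalfSpace y,
      ‖z - x‖ ≤ 4 * ‖x - y‖ ∧ ‖z - y‖ ≤ 3 * ‖x - y‖ := by
  set r := ‖x - y‖ / ‖x‖
  have hr : 0 ≤ r := by positivity
  have hrx : r * ‖x‖ = ‖x - y‖ :=
    div_mul_cancel_of_imp fun hx => le_antisymm (by simpa [hx] using hxy) (norm_nonneg _)
  have hr' : r ≤ 1 / 2 := div_le_of_le_mul₀ (norm_nonneg x) (by norm_num) (by linarith)
  have hy : ‖y‖ ≤ 3 / 2 * ‖x‖ := by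
    have := norm_sub_norm_le y x
    rw [norm_sub_rev] at this
    linarith
  have hzy : ‖(1 + 2 * r) • y - y‖ ≤ 3 * ‖x - y‖ := by
    calc ‖(1 + 2 * r) • y - y‖ = ‖(2 * r) • y‖ := by rw [add_smul, one_smul, add_sub_cancel_left]
      _ = 2 * r * ‖y‖ := by rw [norm_smul, Real.norm_of_nonneg (by positivity)]
      _ ≤ 2 * r * (3 / 2 * ‖x‖) := by gcongr
      _ = 3 * ‖x - y‖ := by rw [← hrx]; ring
  refine ⟨(1 + 2 * r) • y, ⟨smul_mem_outerHalfSpace_of_near hr hr' hrx.symm,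
    smul_mem_outerHalfSpace_self (by linarith)⟩, ?_, hzy⟩
  have := norm_sub_le_norm_sub_add_norm_sub ((1 + 2 * r) • y) y x
  rw [norm_sub_rev y x] at this
  linarith

lemma norm_image_sub_le_of_norm_fderiv_le_of_exterior {g : E → F} (hg : Differentiable ℝ g)
    {R S : ℝ} (hS : ∀ z, R ≤ ‖z‖ → ‖fderiv ℝ g z‖ ≤ S) {x y : E} (hx : R ≤ ‖x‖) (hy : R ≤ ‖y‖)
    (hxy : ‖x - y‖ ≤ ‖x‖ / 2) : ‖g x - g y‖ ≤ 7 * S * ‖x - y‖ := by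
  have hS0 : 0 ≤ S := (norm_nonneg _).trans (hS x hx)
  obtain ⟨z, ⟨hzx, hzy⟩, hdx, hdy⟩ := exists_mem_outerHalfSpace_inter hxy
  have hgx := norm_image_sub_le_of_mem_outerHalfSpace hg (fun w hw => hS w (hx.trans hw)) hzx
  have hgy := norm_image_sub_le_of_mem_outerHalfSpace hg (fun w hw => hS w (hy.trans hw)) hzy
  calc ‖g x - g y‖ = ‖(g z - g y) - (g z - g x)‖ := by rw [sub_sub_sub_cancel_left]
    _ ≤ ‖g z - g y‖ + ‖g z - g x‖ := norm_sub_le _ _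
    _ ≤ S * (3 * ‖x - y‖) + S * (4 * ‖x - y‖) :=
        add_le_add (hgy.trans (by gcongr)) (hgx.trans (by gcongr))
    _ = 7 * S * ‖x - y‖ := by ring

end HalfSpaces

section ScaleOptimization

lemma one_le_two_mul_rpow {r s : ℝ} (hr : 1 / 2 ≤ r) (hs : 0 ≤ s) (hs1 : s ≤ 1) :
    1 ≤ 2 * r ^ s := by
  calc (1 : ℝ) = 2 * (1 / 2) ^ (1 : ℝ) := by norm_num
    _ ≤ 2 * (1 / 2) ^ s := by
        gcongr 2 * ?_
        exact Real.rpow_le_rpow_of_exponent_ge (by norm_num) (by norm_num) hs1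
    _ ≤ 2 * r ^ s := by gcongr

lemma le_mul_rpow_mul_rpow_of_forall_scale_le_of_pos {A H K X a b : ℝ} (hA : 0 < A)
    (hAH : A ≤ H) (hb : 0 < b)
    (hX : ∀ h, 0 < h → h ≤ 1 → X ≤ K * ((A + H * h ^ b) / h ^ a)) :
    X ≤ K * (2 * (A ^ (1 - a / b) * H ^ (a / b))) := by
  have hH : 0 < H := hA.trans_le hAH
  have hratio : 0 < A / H := div_pos hA hH
  set h := (A / H) ^ (1 / b)
  have hh : 0 < h := Real.rpow_pos_of_pos hratio _
  have hh1 : h ≤ 1 := Real.rpow_le_one hratio.le ((div_le_one hH).2 hAH) (by positivity)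
  have hbalance : H * h ^ b = A := by
    rw [← Real.rpow_mul hratio.le, one_div_mul_cancel hb.ne', Real.rpow_one,
      mul_div_cancel₀ _ hH.ne']
  have hvalue : A / h ^ a = A ^ (1 - a / b) * H ^ (a / b) := by
    rw [← Real.rpow_mul hratio.le, Real.div_rpow hA.le hH.le, Real.rpow_sub hA,
      Real.rpow_one, one_div_mul_eq_div, div_div_eq_mul_div, div_mul_eq_mul_div]
  calc X ≤ K * ((A + H * h ^ b) / h ^ a) := hX h hh hh1
    _ = K * (2 * (A / h ^ a)) := by rw [hbalance]; ring
    _ = K * (2 * (A ^ (1 - a / b) * H ^ (a / b))) := by rw [hvalue]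

lemma le_mul_rpow_mul_rpow_of_forall_scale_le {A H K X a b : ℝ} (hA : 0 ≤ A) (hAH : A ≤ H)
    (hK : 0 ≤ K) (ha : 0 ≤ a) (hab : a ≤ b) (hb : 0 < b)
    (hX : ∀ h, 0 < h → h ≤ 1 → X ≤ K * ((A + H * h ^ b) / h ^ a)) :
    X ≤ K * (2 * (A ^ (1 - a / b) * H ^ (a / b))) := by
  -- The balanced scale `(A / H) ^ (1 / b)` is not positive for `A = 0`; enlarging both bounds by
  -- `δ` and letting `δ → 0` covers that case.
  have hperturb : ∀ δ : ℝ, 0 < δ →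
      X ≤ K * (2 * ((A + δ) ^ (1 - a / b) * (H + δ) ^ (a / b))) := fun δ hδ =>
    le_mul_rpow_mul_rpow_of_forall_scale_le_of_pos (by positivity) (by linarith) hb
      fun h hh hh1 => (hX h hh hh1).trans (by gcongr <;> linarith)
  have hcont : Continuous fun δ : ℝ =>
      K * (2 * ((A + δ) ^ (1 - a / b) * (H + δ) ^ (a / b))) :=
    continuous_const.mul <| continuous_const.mul <|
      ((continuous_const.add continuous_id).rpow_const
        fun _ => Or.inr (sub_nonneg.2 ((div_le_one hb).2 hab))).mul
      ((continuous_const.add continuous_id).rpow_const fun _ => Or.inr (div_nonneg ha hb.le))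
  have hlim := (hcont.tendsto 0).mono_left (nhdsWithin_le_nhds (s := Set.Ioi 0))
  simpa only [add_zero] using
    ge_of_tendsto hlim (Filter.eventually_of_mem self_mem_nhdsWithin hperturb)

end ScaleOptimization

section ExteriorInterpolation

variable {E F : Type*} [NormedAddCommGroup E] [InnerProductSpace ℝ E]
  [NormedAddCommGroup F] [NormedSpace ℝ F]

/-- The data entering the interpolation inequality: `f` is of class `C^m` and, on the exterior
domain `{|x| ≥ R}`, `A` bounds its supremum norm and `H` the `τ`-Hölder seminorm of its `m`-th
derivative. Smoothness is required on the whole space. -/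
structure ExteriorHolderBound (m : ℕ) (τ R A H : ℝ) (f : E → F) : Prop where
  contDiff : ContDiff ℝ m f
  norm_le : ∀ x, R ≤ ‖x‖ → ‖f x‖ ≤ A
  holder_le : ∀ x y, R ≤ ‖x‖ → R ≤ ‖y‖ →
    ‖iteratedFDeriv ℝ m f x - iteratedFDeriv ℝ m f y‖ ≤ H * ‖x - y‖ ^ τ

namespace ExteriorHolderBound

variable {m j : ℕ} {τ R A H h : ℝ} {f : E → F}

lemma norm_iteratedFDeriv_top_le (hf : ExteriorHolderBound m τ R A H f) (hH : 0 ≤ H)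
    (hτ : 0 ≤ τ) (hh : 0 < h) {x : E} (hx : R ≤ ‖x‖) :
    ‖iteratedFDeriv ℝ m f x‖ ≤ (2 ^ m + (m : ℝ) ^ τ) * ((A + H * h ^ ((m : ℝ) + τ)) / h ^ m) := by
  have hA : 0 ≤ A := (norm_nonneg _).trans (hf.norm_le x hx)
  have hext : ∀ y ∈ outerHalfSpace x, R ≤ ‖y‖ :=
    fun y hy => hx.trans (norm_le_of_mem_outerHalfSpace hy)
  have hosc : ∀ y ∈ outerHalfSpace x, ‖y - x‖ ≤ m * h →
      ‖iteratedFDeriv ℝ m f y - iteratedFDeriv ℝ m f x‖ ≤ H * (m * h) ^ τ := fun y hy hyx =>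
    (hf.holder_le y x (hext y hy) hx).trans (by gcongr)
  have hscale : H * (m * h) ^ τ = (m : ℝ) ^ τ * (H * h ^ ((m : ℝ) + τ) / h ^ m) := by
    rw [Real.mul_rpow m.cast_nonneg hh.le, Real.rpow_add hh, Real.rpow_natCast]
    field_simp
  calc ‖iteratedFDeriv ℝ m f x‖ ≤ 2 ^ m * A / h ^ m + H * (m * h) ^ τ :=
        norm_iteratedFDeriv_le_of_outerHalfSpace hf.contDiff hh
          (fun y hy => hf.norm_le y (hext y hy)) hosc
    _ = 2 ^ m * (A / h ^ m) + (m : ℝ) ^ τ * (H * h ^ ((m : ℝ) + τ) / h ^ m) := by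
        rw [hscale, mul_div_assoc]
    _ ≤ 2 ^ m * ((A + H * h ^ ((m : ℝ) + τ)) / h ^ m) +
          (m : ℝ) ^ τ * ((A + H * h ^ ((m : ℝ) + τ)) / h ^ m) := by
        gcongr
        · exact le_add_of_nonneg_right (by positivity)
        · exact le_add_of_nonneg_left hA
    _ = _ := by ring

lemma norm_iteratedFDeriv_le_of_succ (hf : ExteriorHolderBound m τ R A H f) (hH : 0 ≤ H)
    (hjm : j < m) {C : ℝ} (hh : 0 < h)
    (hsucc : ∀ x, R ≤ ‖x‖ →
      ‖iteratedFDeriv ℝ (j + 1) f x‖ ≤ C * ((A + H * h ^ ((m : ℝ) + τ)) / h ^ (j + 1)))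
    {x : E} (hx : R ≤ ‖x‖) :
    ‖iteratedFDeriv ℝ j f x‖ ≤ (2 ^ j + C * j) * ((A + H * h ^ ((m : ℝ) + τ)) / h ^ j) := by
  set Q := A + H * h ^ ((m : ℝ) + τ)
  have hAQ : A ≤ Q := le_add_of_nonneg_right (by positivity)
  have hdiff : Differentiable ℝ (iteratedFDeriv ℝ j f) :=
    hf.contDiff.differentiable_iteratedFDeriv (by exact_mod_cast hjm)
  have hosc : ∀ y ∈ outerHalfSpace x, ‖y - x‖ ≤ j * h →
      ‖iteratedFDeriv ℝ j f y - iteratedFDeriv ℝ j f x‖ ≤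
        C * (Q / h ^ (j + 1)) * (j * h) := fun y hy hyx =>
    (norm_image_sub_le_of_mem_outerHalfSpace hdiff (fun z hz => by
      rw [norm_fderiv_iteratedFDeriv]; exact hsucc z (hx.trans hz)) hy).trans <|
    mul_le_mul_of_nonneg_left hyx ((norm_nonneg _).trans (hsucc x hx))
  calc ‖iteratedFDeriv ℝ j f x‖ ≤ 2 ^ j * A / h ^ j + C * (Q / h ^ (j + 1)) * (j * h) :=
        norm_iteratedFDeriv_le_of_outerHalfSpace
          (hf.contDiff.of_le (by exact_mod_cast hjm.le)) hh
          (fun y hy => hf.norm_le y (hx.trans (norm_le_of_mem_outerHalfSpace hy))) hosc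
    _ ≤ 2 ^ j * Q / h ^ j + C * (Q / h ^ (j + 1)) * (j * h) := by gcongr
    _ = (2 ^ j + C * j) * (Q / h ^ j) := by field_simp; ring

variable (E F) in
lemma exists_norm_iteratedFDeriv_le (hτ : 0 ≤ τ) (hj : j ≤ m) :
    ∃ C : ℝ, 0 ≤ C ∧ ∀ (R A H h : ℝ) (f : E → F), ExteriorHolderBound m τ R A H f → 0 ≤ H →
      0 < h → ∀ x, R ≤ ‖x‖ →
        ‖iteratedFDeriv ℝ j f x‖ ≤ C * ((A + H * h ^ ((m : ℝ) + τ)) / h ^ j) := by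
  induction hj using Nat.decreasingInduction with
  | self =>
    exact ⟨2 ^ m + (m : ℝ) ^ τ, by positivity, fun R A H h f hf hH hh x hx =>
      hf.norm_iteratedFDeriv_top_le hH hτ hh hx⟩
  | of_succ j hjm ih =>
    obtain ⟨C, hC, hsucc⟩ := ih
    exact ⟨2 ^ j + C * j, by positivity, fun R A H h f hf hH hh x hx =>
      hf.norm_iteratedFDeriv_le_of_succ hH hjm hh (hsucc R A H h f hf hH hh) hx⟩

lemma norm_iteratedFDeriv_top_sub_le_of_near (hf : ExteriorHolderBound m τ R A H f) (hH : 0 ≤ H)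
    {s : ℝ} (hs : 0 ≤ s) (hsτ : s ≤ τ) (hh : 0 < h) {x y : E} (hx : R ≤ ‖x‖) (hy : R ≤ ‖y‖)
    (hxy : ‖x - y‖ ≤ h) :
    ‖iteratedFDeriv ℝ m f x - iteratedFDeriv ℝ m f y‖ ≤
      (A + H * h ^ ((m : ℝ) + τ)) / h ^ m * (‖x - y‖ / h) ^ s := by
  have hA : 0 ≤ A := (norm_nonneg _).trans (hf.norm_le x hx)
  calc ‖iteratedFDeriv ℝ m f x - iteratedFDeriv ℝ m f y‖ ≤ H * ‖x - y‖ ^ τ :=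
        hf.holder_le x y hx hy
    _ = H * h ^ ((m : ℝ) + τ) / h ^ m * (‖x - y‖ / h) ^ τ := by
        rw [Real.div_rpow (norm_nonneg _) hh.le, Real.rpow_add hh, Real.rpow_natCast]
        field_simp
    _ ≤ (A + H * h ^ ((m : ℝ) + τ)) / h ^ m * (‖x - y‖ / h) ^ s := by
        gcongr ?_ / _ * ?_
        · exact le_add_of_nonneg_left hA
        · exact Real.rpow_le_rpow_of_exponent_ge' (by positivity) ((div_le_one hh).2 hxy) hs hsτ

lemma norm_iteratedFDeriv_sub_le_of_near_of_succ (hf : ExteriorHolderBound m τ R A H f)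
    (hjm : j < m) {B s : ℝ} (hs : 0 ≤ s) (hs1 : s ≤ 1) (hh : 0 < h) (hhR : h ≤ R)
    (hsucc : ∀ x, R ≤ ‖x‖ → ‖iteratedFDeriv ℝ (j + 1) f x‖ ≤ B / h ^ (j + 1))
    {x y : E} (hx : R ≤ ‖x‖) (hy : R ≤ ‖y‖) (hxy : ‖x - y‖ ≤ h / 2) :
    ‖iteratedFDeriv ℝ j f x - iteratedFDeriv ℝ j f y‖ ≤
      7 * (B / h ^ j) * (‖x - y‖ / h) ^ s := by
  have hdiff : Differentiable ℝ (iteratedFDeriv ℝ j f) :=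
    hf.contDiff.differentiable_iteratedFDeriv (by exact_mod_cast hjm)
  have hB : 0 ≤ B := by
    simpa only [zero_mul] using
      (le_div_iff₀ (pow_pos hh _)).1 ((norm_nonneg _).trans (hsucc x hx))
  calc ‖iteratedFDeriv ℝ j f x - iteratedFDeriv ℝ j f y‖
      ≤ 7 * (B / h ^ (j + 1)) * ‖x - y‖ :=
        norm_image_sub_le_of_norm_fderiv_le_of_exterior hdiff
          (fun z hz => by rw [norm_fderiv_iteratedFDeriv]; exact hsucc z hz) hx hy (by linarith)
    _ = 7 * (B / h ^ j) * (‖x - y‖ / h) ^ (1 : ℝ) := by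
        rw [Real.rpow_one]
        field_simp
        ring
    _ ≤ 7 * (B / h ^ j) * (‖x - y‖ / h) ^ s := by
        gcongr _ * ?_
        exact Real.rpow_le_rpow_of_exponent_ge' (by positivity)
          ((div_le_one hh).2 (by linarith)) hs hs1

variable (E F) in
lemma exists_norm_iteratedFDeriv_sub_le_of_near {s : ℝ} (hs : 0 ≤ s) (hs1 : s ≤ 1)
    (hτ : 0 ≤ τ) (hj : j ≤ m) (hjs : j + s ≤ m + τ) :
    ∃ C : ℝ, 0 ≤ C ∧ ∀ (R A H h : ℝ) (f : E → F), ExteriorHolderBound m τ R A H f → 0 ≤ H →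
      0 < h → h ≤ R → ∀ x y, R ≤ ‖x‖ → R ≤ ‖y‖ → ‖x - y‖ ≤ h / 2 →
        ‖iteratedFDeriv ℝ j f x - iteratedFDeriv ℝ j f y‖ ≤
          C * ((A + H * h ^ ((m : ℝ) + τ)) / h ^ j) * (‖x - y‖ / h) ^ s := by
  rcases hj.eq_or_lt with rfl | hjm
  · refine ⟨1, zero_le_one, fun R A H h f hf hH hh _ x y hx hy hxy => ?_⟩
    rw [one_mul]
    exact hf.norm_iteratedFDeriv_top_sub_le_of_near hH hs (by linarith) hh hx hy (by linarith)
  · obtain ⟨C, hC, hsucc⟩ := exists_norm_iteratedFDeriv_le E F hτ (Nat.succ_le_of_lt hjm)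
    refine ⟨7 * C, by positivity, fun R A H h f hf hH hh hhR x y hx hy hxy => ?_⟩
    rw [mul_assoc 7, ← mul_div_assoc]
    exact hf.norm_iteratedFDeriv_sub_le_of_near_of_succ hjm hs hs1 hh hhR
      (fun z hz => by simpa only [mul_div_assoc] using hsucc R A H h f hf hH hh z hz) hx hy hxy

variable (E F) in
lemma exists_norm_iteratedFDeriv_sub_le {s : ℝ} (hs : 0 ≤ s) (hs1 : s ≤ 1)
    (hτ : 0 ≤ τ) (hj : j ≤ m) (hjs : j + s ≤ m + τ) :
    ∃ C : ℝ, 0 ≤ C ∧ ∀ (R A H h : ℝ) (f : E → F), ExteriorHolderBound m τ R A H f → 0 ≤ H →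
      0 < h → h ≤ R → ∀ x y, R ≤ ‖x‖ → R ≤ ‖y‖ →
        ‖iteratedFDeriv ℝ j f x - iteratedFDeriv ℝ j f y‖ ≤
          C * ((A + H * h ^ ((m : ℝ) + τ)) / h ^ j) * (‖x - y‖ / h) ^ s := by
  obtain ⟨C, hC, hsup⟩ := exists_norm_iteratedFDeriv_le E F hτ hj
  obtain ⟨D, hD, hnear⟩ := exists_norm_iteratedFDeriv_sub_le_of_near E F hs hs1 hτ hj hjs
  refine ⟨4 * C + D, by positivity, fun R A H h f hf hH hh hhR x y hx hy => ?_⟩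
  have hA : 0 ≤ A := (norm_nonneg _).trans (hf.norm_le x hx)
  set Q := A + H * h ^ ((m : ℝ) + τ)
  rcases le_total ‖x - y‖ (h / 2) with hxy | hxy
  · calc _ ≤ D * (Q / h ^ j) * (‖x - y‖ / h) ^ s :=
          hnear R A H h f hf hH hh hhR x y hx hy hxy
      _ ≤ (4 * C + D) * (Q / h ^ j) * (‖x - y‖ / h) ^ s := by
          gcongr
          linarith
  · have hfar : 1 ≤ 2 * (‖x - y‖ / h) ^ s :=
      one_le_two_mul_rpow ((le_div_iff₀ hh).2 (by linarith)) hs hs1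
    calc _ ≤ C * (Q / h ^ j) + C * (Q / h ^ j) :=
          (norm_sub_le _ _).trans
            (add_le_add (hsup R A H h f hf hH hh x hx) (hsup R A H h f hf hH hh y hy))
      _ = 2 * C * (Q / h ^ j) * 1 := by ring
      _ ≤ 2 * C * (Q / h ^ j) * (2 * (‖x - y‖ / h) ^ s) := by gcongr
      _ = (4 * C + 0) * (Q / h ^ j) * (‖x - y‖ / h) ^ s := by ring
      _ ≤ (4 * C + D) * (Q / h ^ j) * (‖x - y‖ / h) ^ s := by gcongr

variable (E F) in
lemma exists_norm_iteratedFDeriv_le_interpolation {s : ℝ} (hs : 0 ≤ s) (hτ : 0 < τ)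
    (hj : j ≤ m) (hjs : j + s ≤ m + τ) :
    ∃ C : ℝ, 0 ≤ C ∧ ∀ (R A H : ℝ) (f : E → F), ExteriorHolderBound m τ R A H f → A ≤ H →
      ∀ x, R ≤ ‖x‖ → ‖iteratedFDeriv ℝ j f x‖ ≤
        C * (A ^ (1 - (j + s) / (m + τ)) * H ^ ((j + s) / (m + τ))) := by
  obtain ⟨C, hC, hbound⟩ := exists_norm_iteratedFDeriv_le E F hτ.le hj
  refine ⟨C * 2, by positivity, fun R A H f hf hAH x hx => ?_⟩
  have hA : 0 ≤ A := (norm_nonneg _).trans (hf.norm_le x hx)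
  rw [mul_assoc]
  refine le_mul_rpow_mul_rpow_of_forall_scale_le hA hAH hC (by positivity) hjs (by positivity)
    fun h hh hh1 => (hbound R A H h f hf (hA.trans hAH) hh x hx).trans ?_
  have hH : 0 ≤ H := hA.trans hAH
  gcongr _ * (_ / ?_)
  rw [← Real.rpow_natCast]
  exact Real.rpow_le_rpow_of_exponent_ge hh hh1 (by linarith)

variable (E F) in
lemma exists_norm_iteratedFDeriv_sub_le_interpolation {s : ℝ} (hs : 0 ≤ s) (hs1 : s ≤ 1)
    (hτ : 0 < τ) (hj : j ≤ m) (hjs : j + s ≤ m + τ) :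
    ∃ C : ℝ, 0 ≤ C ∧ ∀ (R A H : ℝ) (f : E → F), ExteriorHolderBound m τ R A H f → A ≤ H →
      1 ≤ R → ∀ x y, R ≤ ‖x‖ → R ≤ ‖y‖ →
        ‖iteratedFDeriv ℝ j f x - iteratedFDeriv ℝ j f y‖ ≤
          C * (A ^ (1 - (j + s) / (m + τ)) * H ^ ((j + s) / (m + τ))) * ‖x - y‖ ^ s := by
  obtain ⟨C, hC, hbound⟩ := exists_norm_iteratedFDeriv_sub_le E F hs hs1 hτ.le hj hjs
  refine ⟨C * 2, by positivity, fun R A H f hf hAH hR x y hx hy => ?_⟩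
  have hA : 0 ≤ A := (norm_nonneg _).trans (hf.norm_le x hx)
  rw [mul_assoc C, mul_right_comm]
  refine le_mul_rpow_mul_rpow_of_forall_scale_le hA hAH (by positivity) (by positivity) hjs
    (by positivity) fun h hh hh1 =>
      (hbound R A H h f hf (hA.trans hAH) hh (hh1.trans hR) x y hx hy).trans_eq ?_
  rw [Real.div_rpow (norm_nonneg _) hh.le, Real.rpow_add hh (j : ℝ), Real.rpow_natCast]
  field_simp

end ExteriorHolderBound

end ExteriorInterpolation

section ExteriorNorms

variable {n m i j : ℕ} {s τ R : ℝ} {f : V n → ℂ}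

lemma extCb_nonneg (n m : ℕ) (R : ℝ) (f : V n → ℂ) : 0 ≤ extCb n m R f :=
  Real.iSup_nonneg fun _ => Real.iSup_nonneg fun _ => norm_nonneg _

lemma extCb_le_extHol (n m : ℕ) (τ R : ℝ) (f : V n → ℂ) : extCb n m R f ≤ extHol n m τ R f :=
  le_add_of_nonneg_right (Real.iSup_nonneg fun _ => Real.iSup_nonneg fun _ => by positivity)

lemma extHol_nonneg (n m : ℕ) (τ R : ℝ) (f : V n → ℂ) : 0 ≤ extHol n m τ R f :=
  (extCb_nonneg n m R f).trans (extCb_le_extHol n m τ R f)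

namespace MemHold

lemma norm_iteratedFDeriv_le_extCb (hf : MemHold n m τ f) {k : ℕ} (hk : k ≤ m) (hi : i ≤ k)
    {x : V n} (hx : R ≤ ‖x‖) : ‖iteratedFDeriv ℝ i f x‖ ≤ extCb n k R f := by
  obtain ⟨-, C, hC⟩ := hf
  have hbdd : BddAbove (Set.range fun y : {y : V n // R ≤ ‖y‖} => ‖iteratedFDeriv ℝ i f y‖) :=
    ⟨C, Set.forall_mem_range.2 fun y => (hC i (hi.trans hk)).1 y⟩
  exact (le_ciSup hbdd ⟨x, hx⟩).trans
    (le_ciSup (f := fun i : Fin (k + 1) => ⨆ y : {y : V n // R ≤ ‖y‖}, ‖iteratedFDeriv ℝ i f y‖)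
      (Set.finite_range _).bddAbove ⟨i, Nat.lt_succ_of_le hi⟩)

lemma extCb_zero_le_extCb (hf : MemHold n m τ f) : extCb n 0 R f ≤ extCb n m R f :=
  Real.iSup_le (fun i => Real.iSup_le (fun x =>
    hf.norm_iteratedFDeriv_le_extCb le_rfl (by omega) x.2) (extCb_nonneg n m R f))
    (extCb_nonneg n m R f)

lemma norm_iteratedFDeriv_sub_le_extHol (hf : MemHold n m τ f) (hi : i ≤ m) {x y : V n}
    (hx : R ≤ ‖x‖) (hy : R ≤ ‖y‖) :
    ‖iteratedFDeriv ℝ i f x - iteratedFDeriv ℝ i f y‖ ≤ extHol n m τ R f * ‖x - y‖ ^ τ := by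
  have hH := extHol_nonneg n m τ R f
  rcases eq_or_ne x y with rfl | hxy
  · rw [sub_self, norm_zero]
    positivity
  rw [← div_le_iff₀ (Real.rpow_pos_of_pos (norm_pos_iff.2 (sub_ne_zero.2 hxy)) τ)]
  obtain ⟨-, C, hC⟩ := hf
  have hC0 : 0 ≤ C := (norm_nonneg _).trans ((hC i hi).1 x)
  let q : Fin (m + 1) → {x : V n // R ≤ ‖x‖} × {x : V n // R ≤ ‖x‖} → ℝ := fun i p =>
    ‖iteratedFDeriv ℝ i f p.1 - iteratedFDeriv ℝ i f p.2‖ / ‖(p.1 : V n) - (p.2 : V n)‖ ^ τ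
  let i' : Fin (m + 1) := ⟨i, Nat.lt_succ_of_le hi⟩
  have hbdd : BddAbove (Set.range (q i')) := ⟨C, Set.forall_mem_range.2 fun p =>
    div_le_of_le_mul₀ (by positivity) hC0 ((hC i hi).2 p.1 p.2)⟩
  calc _ ≤ ⨆ p, q i' p := le_ciSup hbdd (⟨x, hx⟩, ⟨y, hy⟩)
    _ ≤ ⨆ i, ⨆ p, q i p :=
        le_ciSup (f := fun i => ⨆ p, q i p) (Set.finite_range _).bddAbove i'
    _ ≤ extHol n m τ R f := le_add_of_nonneg_left (extCb_nonneg n m R f)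

lemma exteriorHolderBound (hf : MemHold n m τ f) :
    ExteriorHolderBound m τ R (extCb n 0 R f) (extHol n m τ R f) f where
  contDiff := hf.1
  norm_le x hx := by simpa using hf.norm_iteratedFDeriv_le_extCb (Nat.zero_le m) le_rfl hx
  holder_le _ _ hx hy := hf.norm_iteratedFDeriv_sub_le_extHol le_rfl hx hy

end MemHold

lemma norm_apply_single_le {F : Type*} [NormedAddCommGroup F] [NormedSpace ℝ F]
    (d : Fin j → Fin n) (M : (V n) [×j]→L[ℝ] F) :
    ‖M (fun i => EuclideanSpace.single (d i) 1)‖ ≤ ‖M‖ := by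
  simpa using M.le_opNorm (fun i => EuclideanSpace.single (d i) (1 : ℝ))

lemma extC0s_pd_le (d : Fin j → Fin n) {B D : ℝ} (hB : 0 ≤ B) (hD : 0 ≤ D)
    (hsup : ∀ x : V n, R ≤ ‖x‖ → ‖iteratedFDeriv ℝ j f x‖ ≤ B)
    (hholder : ∀ x y : V n, R ≤ ‖x‖ → R ≤ ‖y‖ →
      ‖iteratedFDeriv ℝ j f x - iteratedFDeriv ℝ j f y‖ ≤ D * ‖x - y‖ ^ s) :
    extC0s n s R (pd n j d f) ≤ B + D := by
  refine add_le_add (Real.iSup_le (fun x => (norm_apply_single_le d _).trans (hsup x x.2)) hB)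
    (Real.iSup_le (fun p => div_le_of_le_mul₀ (by positivity) hD ?_) hD)
  exact (norm_apply_single_le d (iteratedFDeriv ℝ j f p.1 - iteratedFDeriv ℝ j f p.2)).trans
    (hholder p.1 p.2 p.1.2 p.2.2)

end ExteriorNorms

theorem stmt18_general (n m j : ℕ) (hj : j ≤ m) (d : Fin j → Fin n) (s τ : ℝ) (hs : 0 ≤ s)
    (hs1 : s ≤ 1) (hτ : 0 < τ) (hjs : (j : ℝ) + s ≤ m + τ) :
    ∃ C > 0, ∀ R : ℝ, 1 ≤ R → ∀ f : V n → ℂ, MemHold n m τ f →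
      extC0s n s R (pd n j d f) ≤ C * extCb n 0 R f ^ (1 - ((j : ℝ) + s) / ((m : ℝ) + τ)) *
        extHol n m τ R f ^ (((j : ℝ) + s) / ((m : ℝ) + τ)) := by
  obtain ⟨B, hB, hsup⟩ :=
    ExteriorHolderBound.exists_norm_iteratedFDeriv_le_interpolation (V n) ℂ hs hτ hj hjs
  obtain ⟨D, hD, hholder⟩ :=
    ExteriorHolderBound.exists_norm_iteratedFDeriv_sub_le_interpolation (V n) ℂ hs hs1 hτ hj hjs
  refine ⟨B + D + 1, by positivity, fun R hR f hf => ?_⟩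
  have hA := extCb_nonneg n 0 R f
  have hH := extHol_nonneg n m τ R f
  have hAH := (hf.extCb_zero_le_extCb (R := R)).trans (extCb_le_extHol n m τ R f)
  have hb := hf.exteriorHolderBound (R := R)
  set T := extCb n 0 R f ^ (1 - ((j : ℝ) + s) / (m + τ)) *
    extHol n m τ R f ^ (((j : ℝ) + s) / (m + τ)) with hT
  have hT0 : 0 ≤ T := by positivity
  rw [mul_assoc, ← hT]
  calc extC0s n s R (pd n j d f) ≤ B * T + D * T :=
        extC0s_pd_le d (by positivity) (by positivity) (hsup R _ _ f hb hAH)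
          (hholder R _ _ f hb hAH hR)
    _ ≤ (B + D + 1) * T := by linarith

/-- exterior-domain interpolation estimate for the `C^{0,s}` norm of `∂^α f`,
with constants independent of `R ≥ 1`. -/
theorem stmt18 (n m : ℕ) (hm : 1 ≤ m) (j : ℕ) (hj : j ≤ m) (d : Fin j → Fin n)
    (s τ : ℝ) (hs : 0 < s) (hsτ : s < τ) (hτ : τ < 1) :
    ∃ C₁ > 0, ∃ C₂ > 0, ∀ R : ℝ, 1 ≤ R → ∀ f : V n → ℂ, MemHold n m τ f →
      extC0s n s R (pd n j d f) ≤
        C₁ * extCb n 0 R f ^ (1 - (j:ℝ)/(m:ℝ)) * extCb n m R f ^ ((j:ℝ)/(m:ℝ)) +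
        C₂ * extCb n 0 R f ^ (1 - ((j:ℝ)+s)/((m:ℝ)+τ)) *
          extHol n m τ R f ^ (((j:ℝ)+s)/((m:ℝ)+τ)) := by
  obtain ⟨C, hC, hbound⟩ := stmt18_general n m j hj d s τ hs.le (hsτ.trans hτ).le (hs.trans hsτ)
    (add_le_add (Nat.cast_le.2 hj) hsτ.le)
  exact ⟨1, one_pos, C, hC, fun R hR f hf => (hbound R hR f hf).trans <| le_add_of_nonneg_left <|
    have := extCb_nonneg n 0 R f; have := extCb_nonneg n m R f; by positivity⟩
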